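/- Let 𝕜 be an algebraically closed field of characteristic zero. Let Ω_1,…,Ω_d ∈ 𝕜[x,y,z] be homogeneous polynomials with isolated singularities whose degrees are pairwise distinct and each at least 5, and let ξ_1,…,ξ_d ∈ 𝕜. Then the Poisson algebra P = P_{Ω_1−ξ_1} ⊗_𝕜 ⋯ ⊗_𝕜 P_{Ω_d−ξ_d} is Poisson simple if and only if ξ_i ≠ 0 for all i = 1,…,d. -/

import Mathlib

open scoped TensorProduct

/-- A Poisson bracket on a commutative algebra `A` over `𝕜`: a bilinear, antisymmetric
bracket satisfying the Jacobi identity and the Leibniz rule. -/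
structure PoissonStructure (𝕜 A : Type*) [CommRing 𝕜] [CommRing A] [Algebra 𝕜 A] where
  bracket : A → A → A
  add_left : ∀ a b c : A, bracket (a + b) c = bracket a c + bracket b c
  smul_left : ∀ (r : 𝕜) (a b : A), bracket (r • a) b = r • bracket a b
  antisymm : ∀ a b : A, bracket a b = - bracket b a
  jacobi : ∀ a b c : A,
    bracket a (bracket b c) + bracket b (bracket c a) + bracket c (bracket a b) = 0
  leibniz : ∀ a b c : A, bracket a (b * c) = bracket a b * c + b * bracket a c

/-- `f` is a morphism of Poisson algebras. -/
def IsPoissonHom {𝕜 A B : Type*} [CommRing 𝕜] [CommRing A] [CommRing B]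
    [Algebra 𝕜 A] [Algebra 𝕜 B]
    (PA : PoissonStructure 𝕜 A) (PB : PoissonStructure 𝕜 B) (f : A →ₐ[𝕜] B) : Prop :=
  ∀ a b : A, f (PA.bracket a b) = PB.bracket (f a) (f b)

/-- A Poisson algebra is Dixmier if every injective Poisson endomorphism is bijective. -/
def IsDixmier (𝕜 A : Type*) [CommRing 𝕜] [CommRing A] [Algebra 𝕜 A]
    (PA : PoissonStructure 𝕜 A) : Prop :=
  ∀ f : A →ₐ[𝕜] A, IsPoissonHom PA PA f → Function.Injective f → Function.Bijective f

/-- The tensor-product Poisson bracket on `A ⊗[𝕜] B`. -/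
def IsTensorBracket {𝕜 A B : Type*} [CommRing 𝕜] [CommRing A] [CommRing B]
    [Algebra 𝕜 A] [Algebra 𝕜 B] (PA : PoissonStructure 𝕜 A) (PB : PoissonStructure 𝕜 B)
    (PT : PoissonStructure 𝕜 (A ⊗[𝕜] B)) : Prop :=
  ∀ (a a' : A) (b b' : B),
    PT.bracket (a ⊗ₜ[𝕜] b) (a' ⊗ₜ[𝕜] b') =
      PA.bracket a a' ⊗ₜ[𝕜] (b * b') + (a * a') ⊗ₜ[𝕜] PB.bracket b b'

/-- `A` is `R`-Dixmier: every injective Poisson morphism `A → A ⊗ R` has image `A ⊗ 𝕜·1`. -/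
def IsRelDixmier (𝕜 A R : Type*) [CommRing 𝕜] [CommRing A] [CommRing R]
    [Algebra 𝕜 A] [Algebra 𝕜 R] (PA : PoissonStructure 𝕜 A)
    (PT : PoissonStructure 𝕜 (A ⊗[𝕜] R)) : Prop :=
  ∀ f : A →ₐ[𝕜] A ⊗[𝕜] R, IsPoissonHom PA PT f → Function.Injective f →
    Set.range f = Set.range fun a : A => a ⊗ₜ[𝕜] (1 : R)

/-- A Poisson algebra is Poisson simple if its only Poisson ideals are `0` and the whole ring. -/
def IsPoissonSimple {𝕜 A : Type*} [CommRing 𝕜] [CommRing A] [Algebra 𝕜 A]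
    (PA : PoissonStructure 𝕜 A) : Prop :=
  ∀ I : Ideal A, (∀ x : A, ∀ y ∈ I, PA.bracket x y ∈ I) → I = ⊥ ∨ I = ⊤

open MvPolynomial in
/-- The Jacobian Poisson bracket with potential `Ω` on `𝕜[x,y,z]`. -/
noncomputable def jacBracket {𝕜 : Type*} [CommRing 𝕜]
    (Ω f g : MvPolynomial (Fin 3) 𝕜) : MvPolynomial (Fin 3) 𝕜 :=
  Matrix.det (Matrix.of
    ![![pderiv 0 f, pderiv 1 f, pderiv 2 f],
      ![pderiv 0 g, pderiv 1 g, pderiv 2 g],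
      ![pderiv 0 Ω, pderiv 1 Ω, pderiv 2 Ω]])

open MvPolynomial in
/-- `Ω` has an isolated singularity at the origin. -/
def HasIsolatedSingularity {𝕜 : Type*} [Field 𝕜] (Ω : MvPolynomial (Fin 3) 𝕜) : Prop :=
  FiniteDimensional 𝕜
    (MvPolynomial (Fin 3) 𝕜 ⧸ Ideal.span {pderiv (0 : Fin 3) Ω, pderiv 1 Ω, pderiv 2 Ω})

/-- The underlying commutative algebra of `P_{Ω-ξ} = 𝕜[x,y,z]/(Ω-ξ)`. -/
def PQuot (𝕜 : Type*) [CommRing 𝕜] (Ω : MvPolynomial (Fin 3) 𝕜) (ξ : 𝕜) : Type _ :=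
  MvPolynomial (Fin 3) 𝕜 ⧸ Ideal.span {Ω - MvPolynomial.C ξ}

noncomputable instance {𝕜 : Type*} [CommRing 𝕜] (Ω : MvPolynomial (Fin 3) 𝕜) (ξ : 𝕜) :
    CommRing (PQuot 𝕜 Ω ξ) :=
  inferInstanceAs (CommRing (MvPolynomial (Fin 3) 𝕜 ⧸ Ideal.span {Ω - MvPolynomial.C ξ}))

noncomputable instance {𝕜 : Type*} [CommRing 𝕜] (Ω : MvPolynomial (Fin 3) 𝕜) (ξ : 𝕜) :
    Algebra 𝕜 (PQuot 𝕜 Ω ξ) :=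
  inferInstanceAs (Algebra 𝕜 (MvPolynomial (Fin 3) 𝕜 ⧸ Ideal.span {Ω - MvPolynomial.C ξ}))

/-- The canonical (surjective) projection `𝕜[x,y,z] → P_{Ω-ξ}`. -/
noncomputable def PQuot.mk {𝕜 : Type*} [CommRing 𝕜] (Ω : MvPolynomial (Fin 3) 𝕜) (ξ : 𝕜)
    (f : MvPolynomial (Fin 3) 𝕜) : PQuot 𝕜 Ω ξ :=
  Ideal.Quotient.mk (Ideal.span {Ω - MvPolynomial.C ξ}) f

/-- `P` is the Poisson bracket on `P_{Ω-ξ}` induced from the Jacobian bracket on `A_Ω`. -/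
def IsInducedBracket {𝕜 : Type*} [CommRing 𝕜] (Ω : MvPolynomial (Fin 3) 𝕜) (ξ : 𝕜)
    (P : PoissonStructure 𝕜 (PQuot 𝕜 Ω ξ)) : Prop :=
  ∀ f g : MvPolynomial (Fin 3) 𝕜,
    P.bracket (PQuot.mk Ω ξ f) (PQuot.mk Ω ξ g) = PQuot.mk Ω ξ (jacBracket Ω f g)

open PiTensorProduct in
/-- The Poisson bracket on a finite tensor product `⨂[𝕜] i, A i`. -/
def IsPiTensorBracket {𝕜 : Type*} [CommRing 𝕜] {d : ℕ} {A : Fin d → Type*}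
    [∀ i, CommRing (A i)] [∀ i, Algebra 𝕜 (A i)]
    (P : ∀ i, PoissonStructure 𝕜 (A i))
    (PT : PoissonStructure 𝕜 (⨂[𝕜] i, A i)) : Prop :=
  ∀ a b : (i : Fin d) → A i,
    PT.bracket (⨂ₜ[𝕜] i, a i) (⨂ₜ[𝕜] i, b i) =
      ∑ i : Fin d,
        ⨂ₜ[𝕜] j, Function.update (fun j => a j * b j) i ((P i).bracket (a i) (b i)) j

/-- The Poisson-torus bracket associated to a matrix `Λ` on the Laurent polynomial ring
`𝕜[x₁^{±1},…,xₙ^{±1}]`, realized as the group algebra of `ℤⁿ`: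
`{x^u, x^v} = (Σ_{i,j} uᵢ λᵢⱼ vⱼ) x^{u+v}`. -/
def IsTorusBracket {𝕜 : Type*} [CommRing 𝕜] (n : ℕ) (Λ : Matrix (Fin n) (Fin n) 𝕜)
    (P : PoissonStructure 𝕜 (AddMonoidAlgebra 𝕜 (Fin n → ℤ))) : Prop :=
  ∀ u v : Fin n → ℤ,
    P.bracket (AddMonoidAlgebra.single u (1 : 𝕜)) (AddMonoidAlgebra.single v (1 : 𝕜)) =
      (∑ i, ∑ j, (u i : 𝕜) * Λ i j * (v j : 𝕜)) • AddMonoidAlgebra.single (u + v) (1 : 𝕜)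

/-- `ν : A → ℤ ∪ {∞}` is a `w`-valuation on the Poisson algebra `A`. -/
structure IsWValuation {𝕜 A : Type*} [CommRing 𝕜] [CommRing A] [Algebra 𝕜 A]
    (P : PoissonStructure 𝕜 A) (w : ℤ) (ν : A → WithTop ℤ) : Prop where
  eq_top_iff : ∀ a : A, ν a = ⊤ ↔ a = 0
  scalar : ∀ c : 𝕜, c ≠ 0 → ν (algebraMap 𝕜 A c) = 0
  map_mul : ∀ a b : A, ν (a * b) = ν a + ν b
  map_add : ∀ a b : A, min (ν a) (ν b) ≤ ν (a + b)
  map_bracket : ∀ a b : A, ν a + ν b ≤ ν (P.bracket a b) + (w : WithTop ℤ)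

/-!
Let `ξ ≠ 0`. By Euler's identity, an ideal of `𝕜[x,y,z]` that contains `Ω - ξ` and is stable under
the Jacobian bracket is closed under the partial derivatives of its homogeneous elements; and
modulo `Ω - ξ` every polynomial in the forms of degree `deg Ω` is homogeneous, so by integrality
such an ideal, when larger than the prime `(Ω - ξ)`, contains a nonzero homogeneous element and
hence `1`. Thus `P_{Ω-ξ}` is Poisson simple. Its nonzero central elements are then units, and the
units modulo `Ω - ξ` are scalars because the leading form `Ω` is prime. Poisson simplicity together
with a scalar centre passes to tensor products: by Jacobson density, the operators generated by
multiplications and brackets on each factor approximate coordinate functionals, and so carry any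
nonzero tensor to a nonzero scalar. Conversely, Poisson ideals of a factor extend faithfully to the
tensor product, and for `ξ = 0` the origin defines a proper nonzero Poisson ideal of `P_Ω`.
-/

section LeadingForm

open MvPolynomial

variable {σ R : Type*}

section CommSemiring

variable [CommSemiring R]

/-- The leading form of a polynomial: its homogeneous component of top degree. -/
noncomputable def leadingForm (p : MvPolynomial σ R) : MvPolynomial σ R :=
  homogeneousComponent p.totalDegree p

lemma leadingForm_isHomogeneous (p : MvPolynomial σ R) :
    (leadingForm p).IsHomogeneous p.totalDegree :=
  homogeneousComponent_isHomogeneous _ p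

lemma leadingForm_of_isHomogeneous {p : MvPolynomial σ R} {n : ℕ} (hp : p.IsHomogeneous n) :
    leadingForm p = p := by
  rcases eq_or_ne p 0 with rfl | p_ne_zero
  · exact map_zero _
  · rw [leadingForm, hp.totalDegree p_ne_zero, homogeneousComponent_eq_self hp]

lemma leadingForm_ne_zero {p : MvPolynomial σ R} (hp : p ≠ 0) : leadingForm p ≠ 0 := by
  obtain ⟨m, hm, degree_eq⟩ := p.support.exists_mem_eq_sup (support_nonempty.mpr hp)
    fun m => m.sum fun _ e => e
  refine ne_zero_iff.mpr ⟨m, ?_⟩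
  have m_degree : m.degree = p.totalDegree := degree_eq.symm
  rwa [leadingForm, coeff_homogeneousComponent, if_pos m_degree, ← mem_support_iff]

lemma totalDegree_leadingForm (p : MvPolynomial σ R) :
    (leadingForm p).totalDegree = p.totalDegree := by
  rcases eq_or_ne p 0 with rfl | p_ne_zero
  · rw [leadingForm, map_zero]
  · exact (leadingForm_isHomogeneous p).totalDegree (leadingForm_ne_zero p_ne_zero)

lemma constantCoeff_of_isHomogeneous {p : MvPolynomial σ R} {n : ℕ} (hp : p.IsHomogeneous n)
    (hn : n ≠ 0) : constantCoeff p = 0 :=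
  hp.coeff_eq_zero (by simpa using hn.symm)

lemma homogeneousComponent_totalDegree_add_mul (a b : MvPolynomial σ R) :
    homogeneousComponent (a.totalDegree + b.totalDegree) (a * b) =
      homogeneousComponent a.totalDegree a * homogeneousComponent b.totalDegree b := by
  have component_mul (i j : ℕ) : homogeneousComponent (a.totalDegree + b.totalDegree)
      (homogeneousComponent i a * homogeneousComponent j b) =
        if a.totalDegree + b.totalDegree = i + j then
          homogeneousComponent i a * homogeneousComponent j b else 0 :=
    homogeneousComponent_of_mem
      ((homogeneousComponent_isHomogeneous i a).mul (homogeneousComponent_isHomogeneous j b))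
  have mul_eq_sum : a * b = (∑ i ∈ Finset.range (a.totalDegree + 1), homogeneousComponent i a) *
      ∑ j ∈ Finset.range (b.totalDegree + 1), homogeneousComponent j b := by
    rw [sum_homogeneousComponent, sum_homogeneousComponent]
  rw [mul_eq_sum, Finset.sum_mul_sum]
  simp only [map_sum, component_mul]
  rw [Finset.sum_eq_single_of_mem a.totalDegree (Finset.self_mem_range_succ _),
    Finset.sum_eq_single_of_mem b.totalDegree (Finset.self_mem_range_succ _), if_pos rfl]
  · intro j _ hj
    exact if_neg (by omega)
  · intro i hi hia
    refine Finset.sum_eq_zero fun j hj => if_neg ?_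
    rw [Finset.mem_range] at hi hj
    omega

lemma leadingForm_mul [NoZeroDivisors R] (a b : MvPolynomial σ R) :
    leadingForm (a * b) = leadingForm a * leadingForm b := by
  rcases eq_or_ne a 0 with rfl | ha
  · simp [leadingForm]
  rcases eq_or_ne b 0 with rfl | hb
  · simp [leadingForm]
  rw [leadingForm, totalDegree_mul_of_isDomain ha hb, homogeneousComponent_totalDegree_add_mul,
    leadingForm, leadingForm]

lemma leadingForm_dvd_leadingForm [NoZeroDivisors R] {a b : MvPolynomial σ R} (h : a ∣ b) :
    leadingForm a ∣ leadingForm b := by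
  obtain ⟨c, rfl⟩ := h
  exact ⟨leadingForm c, leadingForm_mul a c⟩

end CommSemiring

section CommRing

variable [CommRing R]

lemma totalDegree_sub_lt_of_leadingForm_eq {p q : MvPolynomial σ R}
    (h : leadingForm p = leadingForm q) (hne : p ≠ q) : (p - q).totalDegree < p.totalDegree := by
  have degree_eq : q.totalDegree = p.totalDegree := by
    rw [← totalDegree_leadingForm q, ← h, totalDegree_leadingForm]
  refine lt_of_le_of_ne ((totalDegree_sub p q).trans (by rw [degree_eq, max_self])) fun heq => ?_
  refine leadingForm_ne_zero (sub_ne_zero.mpr hne) ?_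
  have hq : homogeneousComponent p.totalDegree q = leadingForm q := by rw [leadingForm, degree_eq]
  rw [leadingForm, heq, map_sub, hq, ← h, leadingForm, sub_self]

lemma leadingForm_sub_C {p : MvPolynomial σ R} (hp : p.totalDegree ≠ 0) (c : R) :
    leadingForm (p - C c) = leadingForm p := by
  have totalDegree_C_lt : (C (-c) : MvPolynomial σ R).totalDegree < p.totalDegree := by
    rw [totalDegree_C]
    exact Nat.pos_of_ne_zero hp
  rw [sub_eq_add_neg, ← map_neg, leadingForm,
    totalDegree_add_eq_left_of_totalDegree_lt totalDegree_C_lt, map_add,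
    homogeneousComponent_eq_zero _ _ totalDegree_C_lt, add_zero, leadingForm]

/-- Division by `F` on leading forms: subtracting multiples of `F` lowers the degree as long as the
leading form remains divisible by that of `F`. -/
lemma exists_dvd_sub_and_not_leadingForm_dvd [IsDomain R] {F : MvPolynomial σ R} (hF : F ≠ 0)
    (f : MvPolynomial σ R) :
    ∃ g, F ∣ f - g ∧ (g = 0 ∨ ¬ leadingForm F ∣ leadingForm g) := by
  induction hd : f.totalDegree using Nat.strong_induction_on generalizing f with
  | _ d ih =>
    subst hd
    by_cases hdvd : leadingForm F ∣ leadingForm f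
    · obtain ⟨q, hq⟩ := hdvd
      have leadingForm_q : leadingForm q = q := by
        refine mul_left_cancel₀ (leadingForm_ne_zero hF) ?_
        rw [← hq, ← leadingForm_of_isHomogeneous (leadingForm_isHomogeneous f), hq, leadingForm_mul,
          leadingForm_of_isHomogeneous (leadingForm_isHomogeneous F)]
      rcases eq_or_ne f (F * q) with rfl | hne
      · exact ⟨0, by simp, Or.inl rfl⟩
      have degree_lt : (f - F * q).totalDegree < f.totalDegree :=
        totalDegree_sub_lt_of_leadingForm_eq (by rw [leadingForm_mul, leadingForm_q, hq]) hne
      obtain ⟨g, hg, hg'⟩ := ih _ degree_lt (f - F * q) rfl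
      refine ⟨g, ?_, hg'⟩
      rw [show f - g = f - F * q - g + F * q by ring]
      exact hg.add (dvd_mul_right F q)
    · exact ⟨f, by simp, Or.inr hdvd⟩

/-- The units of `R[σ] / (F)` are scalars when the leading form of `F` is prime: the product of two
nonconstant polynomials that are reduced with respect to `F` is again reduced, so not `1`. -/
lemma exists_dvd_sub_C_of_dvd_mul_sub_one [IsDomain R] {F a b : MvPolynomial σ R}
    (hF : Prime (leadingForm F)) (hab : F ∣ a * b - 1) : ∃ c, F ∣ a - C c := by
  have F_ne_zero : F ≠ 0 := by
    rintro rfl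
    exact hF.ne_zero (map_zero _)
  obtain ⟨g, F_dvd_sub_g, hg⟩ := exists_dvd_sub_and_not_leadingForm_dvd F_ne_zero a
  obtain ⟨h, F_dvd_sub_h, hh⟩ := exists_dvd_sub_and_not_leadingForm_dvd F_ne_zero b
  have F_dvd : F ∣ g * h - 1 := by
    rw [show g * h - 1 = a * b - 1 - ((a - g) * b + g * (b - h)) by ring]
    exact dvd_sub hab ((F_dvd_sub_g.mul_right b).add (F_dvd_sub_h.mul_left g))
  rcases hg with rfl | hg
  · exact ⟨0, by simpa using F_dvd_sub_g⟩
  rcases hh with rfl | hh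
  · exact ⟨0, (isUnit_of_dvd_one (by simpa using F_dvd)).dvd⟩
  have ne_zero {p : MvPolynomial σ R} (hp : ¬ leadingForm F ∣ leadingForm p) : p ≠ 0 := by
    rintro rfl
    exact hp (by simp [leadingForm])
  have gh_degree : (g * h).totalDegree = 0 := by
    by_contra gh_degree
    have leadingForm_dvd := leadingForm_dvd_leadingForm F_dvd
    rw [← C_1, leadingForm_sub_C gh_degree, leadingForm_mul] at leadingForm_dvd
    exact (hF.dvd_or_dvd leadingForm_dvd).elim hg hh
  have g_degree : g.totalDegree = 0 := by
    rw [totalDegree_mul_of_isDomain (ne_zero hg) (ne_zero hh)] at gh_degree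
    exact (Nat.add_eq_zero_iff.mp gh_degree).1
  exact ⟨coeff 0 g, by rwa [← totalDegree_eq_zero_iff_eq_C.mp g_degree]⟩

end CommRing

end LeadingForm

section OriginHeight

open MvPolynomial

variable {σ R : Type*}

section CommSemiring

variable [CommSemiring R]

/-- The endomorphism of the polynomial ring that sets the variables in `s` to zero; its kernel is
the prime ideal generated by these variables. -/
noncomputable def killVars (s : Finset σ) : MvPolynomial σ R →ₐ[R] MvPolynomial σ R :=
  open Classical in aeval (s.piecewise 0 X)

lemma killVars_X_of_mem {s : Finset σ} {i : σ} (hi : i ∈ s) :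
    killVars s (X i : MvPolynomial σ R) = 0 := by
  simp [killVars, hi]

lemma killVars_X_of_notMem {s : Finset σ} {i : σ} (hi : i ∉ s) :
    killVars s (X i : MvPolynomial σ R) = X i := by
  simp [killVars, hi]

lemma killVars_killVars_of_subset {s t : Finset σ} (hst : s ⊆ t) (p : MvPolynomial σ R) :
    killVars t (killVars s p) = killVars t p := by
  suffices (killVars t).comp (killVars s) = killVars (R := R) t from DFunLike.congr_fun this p
  ext1 i
  by_cases hi : i ∈ s
  · simp [killVars_X_of_mem hi, killVars_X_of_mem (hst hi)]
  · simp [killVars_X_of_notMem hi]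

lemma killVars_univ [Fintype σ] (p : MvPolynomial σ R) :
    killVars Finset.univ p = C (constantCoeff p) := by
  classical rw [killVars, Finset.piecewise_univ, aeval_zero, algebraMap_eq]

end CommSemiring

section CommRing

variable [CommRing R]

lemma ker_killVars_lt [Nontrivial R] {s t : Finset σ} (hst : s ⊂ t) :
    RingHom.ker (killVars (R := R) s) < RingHom.ker (killVars (R := R) t) := by
  obtain ⟨i, hit, his⟩ := Finset.exists_of_ssubset hst
  refine SetLike.lt_iff_le_and_exists.mpr ⟨fun p hp => ?_, X i, killVars_X_of_mem hit, ?_⟩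
  · rw [RingHom.mem_ker] at hp ⊢
    rw [← killVars_killVars_of_subset hst.subset, hp, map_zero]
  · rw [RingHom.mem_ker, killVars_X_of_notMem his]
    exact X_ne_zero i

lemma card_le_height_ker_killVars [IsDomain R] (s : Finset σ) :
    (s.card : ℕ∞) ≤ (RingHom.ker (killVars (R := R) s)).height := by
  have isPrime (t : Finset σ) : (RingHom.ker (killVars (R := R) t)).IsPrime := RingHom.ker_isPrime _
  induction s using Finset.cons_induction with
  | empty => simp
  | cons i s hi ih =>
    rw [Finset.card_cons, Nat.cast_add, Nat.cast_one]
    exact (add_le_add_left ih 1).trans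
      (Ideal.height_add_one_le_of_lt_of_isPrime (ker_killVars_lt (Finset.ssubset_cons hi)))

end CommRing

lemma card_le_encard_of_finite_quotient_span {σ 𝕜 : Type*} [Fintype σ] [Field 𝕜]
    {s : Set (MvPolynomial σ 𝕜)} (hs : ∀ p ∈ s, constantCoeff p = 0)
    [FiniteDimensional 𝕜 (MvPolynomial σ 𝕜 ⧸ Ideal.span s)] :
    (Fintype.card σ : ℕ∞) ≤ s.encard := by
  let origin := RingHom.ker (killVars (R := 𝕜) (Finset.univ : Finset σ))
  have origin_isPrime : origin.IsPrime := RingHom.ker_isPrime _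
  have s_subset : s ⊆ origin := fun p hp => by
    rw [SetLike.mem_coe, RingHom.mem_ker, killVars_univ, hs p hp, map_zero]
  have : IsArtinianRing (MvPolynomial σ 𝕜 ⧸ Ideal.span s) := IsArtinianRing.of_finite 𝕜 _
  have krullDim_le : ringKrullDim (MvPolynomial σ 𝕜 ⧸ Ideal.span s) ≤ 0 :=
    mod_cast Ring.krullDimLE_iff.mp inferInstance
  have height_le : (origin.height : WithBot ℕ∞) ≤ s.encard := by
    simpa using (Ideal.height_le_ringKrullDim_quotient_add_encard s s_subset).trans
      (add_le_add_left krullDim_le _)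
  exact (card_le_height_ker_killVars Finset.univ).trans (WithBot.coe_le_coe.mp height_le)

end OriginHeight

section IsolatedSingularity

open MvPolynomial

variable {σ 𝕜 : Type*} [Field 𝕜]

lemma isUnit_of_totalDegree_eq_zero {p : MvPolynomial σ 𝕜} (hp : p ≠ 0)
    (hdeg : p.totalDegree = 0) : IsUnit p := by
  rw [totalDegree_eq_zero_iff_eq_C.mp hdeg] at hp ⊢
  exact (IsUnit.mk0 _ (C_ne_zero.mp hp)).map C

lemma irreducible_of_irreducible_leadingForm {p : MvPolynomial σ 𝕜}
    (hp : Irreducible (leadingForm p)) : Irreducible p := by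
  have p_ne_zero : p ≠ 0 := by
    rintro rfl
    exact hp.ne_zero (map_zero _)
  have isUnit_of_isUnit_leadingForm {a : MvPolynomial σ 𝕜} (ha : a ≠ 0)
      (hu : IsUnit (leadingForm a)) : IsUnit a :=
    isUnit_of_totalDegree_eq_zero ha
      (totalDegree_leadingForm a ▸ (isUnit_iff_totalDegree_of_isReduced.mp hu).2)
  constructor
  · intro hu
    refine hp.not_isUnit (isUnit_of_totalDegree_eq_zero hp.ne_zero ?_)
    rw [totalDegree_leadingForm]
    exact (isUnit_iff_totalDegree_of_isReduced.mp hu).2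
  · rintro a b rfl
    exact (hp.isUnit_or_isUnit (leadingForm_mul a b)).imp
      (isUnit_of_isUnit_leadingForm (left_ne_zero_of_mul p_ne_zero))
      (isUnit_of_isUnit_leadingForm (right_ne_zero_of_mul p_ne_zero))

/-- The isolated singularity prevents a factorization `Ω = a * b` through the origin: the locus
`a = b = 0` would be singular, and of positive dimension. -/
lemma HasIsolatedSingularity.ne_mul {Ω a b : MvPolynomial (Fin 3) 𝕜}
    (hΩ : HasIsolatedSingularity Ω) (ha : constantCoeff a = 0) (hb : constantCoeff b = 0) :
    Ω ≠ a * b := by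
  intro hab
  have pderiv_mem (i : Fin 3) : pderiv i Ω ∈ Ideal.span {a, b} := by
    rw [hab, Derivation.leibniz, smul_eq_mul, smul_eq_mul]
    exact add_mem (Ideal.mul_mem_right _ _ (Ideal.subset_span (by simp)))
      (Ideal.mul_mem_right _ _ (Ideal.subset_span (by simp)))
  have span_le : Ideal.span {pderiv (0 : Fin 3) Ω, pderiv 1 Ω, pderiv 2 Ω} ≤ Ideal.span {a, b} := by
    rw [Ideal.span_le]
    rintro _ (rfl | rfl | rfl) <;> exact pderiv_mem _
  have : FiniteDimensional 𝕜 (MvPolynomial (Fin 3) 𝕜 ⧸ Ideal.span {pderiv (0 : Fin 3) Ω,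
    pderiv 1 Ω, pderiv 2 Ω}) := hΩ
  have : FiniteDimensional 𝕜 (MvPolynomial (Fin 3) 𝕜 ⧸ Ideal.span {a, b}) :=
    Module.Finite.of_surjective (Ideal.Quotient.factorₐ 𝕜 span_le).toLinearMap
      (Ideal.Quotient.factor_surjective span_le)
  have three_le_encard : (Fintype.card (Fin 3) : ℕ∞) ≤ Set.encard {a, b} :=
    card_le_encard_of_finite_quotient_span (by rintro _ (rfl | rfl) <;> assumption)
  have three_le_two : (3 : ℕ∞) ≤ 2 := by
    calc (3 : ℕ∞) = Fintype.card (Fin 3) := by rw [Fintype.card_fin, Nat.cast_ofNat]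
      _ ≤ Set.encard {a, b} := three_le_encard
      _ ≤ Set.encard {b} + 1 := Set.encard_insert_le _ _
      _ = 2 := by rw [Set.encard_singleton, one_add_one_eq_two]
  exact absurd three_le_two (by decide)

lemma HasIsolatedSingularity.ne_zero {Ω : MvPolynomial (Fin 3) 𝕜}
    (hΩ : HasIsolatedSingularity Ω) : Ω ≠ 0 := by
  simpa using hΩ.ne_mul (map_zero _) (map_zero _)

lemma HasIsolatedSingularity.irreducible {Ω : MvPolynomial (Fin 3) 𝕜} {n : ℕ}
    (hΩ : HasIsolatedSingularity Ω) (hhom : Ω.IsHomogeneous n) (hn : n ≠ 0) : Irreducible Ω := by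
  constructor
  · intro hu
    rw [isUnit_iff_totalDegree_of_isReduced, hhom.totalDegree hΩ.ne_zero] at hu
    exact hn hu.2
  · intro a b hab
    have ab_ne_zero : a * b ≠ 0 := hab ▸ hΩ.ne_zero
    have constantCoeff_leadingForm {p : MvPolynomial (Fin 3) 𝕜} (hp : p ≠ 0) (hu : ¬ IsUnit p) :
        constantCoeff (leadingForm p) = 0 :=
      constantCoeff_of_isHomogeneous (leadingForm_isHomogeneous p)
        fun h => hu (isUnit_of_totalDegree_eq_zero hp h)
    by_contra! hunits
    refine hΩ.ne_mul
      (constantCoeff_leadingForm (left_ne_zero_of_mul ab_ne_zero) hunits.1)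
      (constantCoeff_leadingForm (right_ne_zero_of_mul ab_ne_zero) hunits.2) ?_
    rw [← leadingForm_mul, ← hab, leadingForm_of_isHomogeneous hhom]

lemma HasIsolatedSingularity.leadingForm_sub_C {Ω : MvPolynomial (Fin 3) 𝕜} {n : ℕ}
    (hΩ : HasIsolatedSingularity Ω) (hhom : Ω.IsHomogeneous n) (hn : n ≠ 0) (ξ : 𝕜) :
    leadingForm (Ω - C ξ) = Ω := by
  rw [_root_.leadingForm_sub_C (by rwa [hhom.totalDegree hΩ.ne_zero]),
    leadingForm_of_isHomogeneous hhom]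

lemma HasIsolatedSingularity.prime_sub_C {Ω : MvPolynomial (Fin 3) 𝕜} {n : ℕ}
    (hΩ : HasIsolatedSingularity Ω) (hhom : Ω.IsHomogeneous n) (hn : n ≠ 0) (ξ : 𝕜) :
    Prime (Ω - C ξ) := by
  refine (irreducible_of_irreducible_leadingForm ?_).prime
  rw [hΩ.leadingForm_sub_C hhom hn]
  exact hΩ.irreducible hhom hn

end IsolatedSingularity

section JacobianStableIdeals

open MvPolynomial

lemma jacBracket_X {R : Type*} [CommRing R] (Ω g : MvPolynomial (Fin 3) R) (i : Fin 3) :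
    jacBracket Ω (X i) g =
      pderiv (i + 1) g * pderiv (i + 2) Ω - pderiv (i + 2) g * pderiv (i + 1) Ω := by
  fin_cases i <;>
    · simp [jacBracket, Matrix.det_fin_three, pderiv_X]
      try ring

lemma pderiv_mul_pderiv_sub_mem {R : Type*} [CommRing R] {Ω g : MvPolynomial (Fin 3) R}
    {J : Ideal (MvPolynomial (Fin 3) R)} (hJ : ∀ f, jacBracket Ω f g ∈ J) (i j : Fin 3) :
    pderiv i Ω * pderiv j g - pderiv j Ω * pderiv i g ∈ J := by
  have mem_succ (i : Fin 3) :
      pderiv i Ω * pderiv (i + 1) g - pderiv (i + 1) Ω * pderiv i g ∈ J := by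
    have add_two_add_one : i + 2 + 1 = i := by decide +revert
    have add_two_add_two : i + 2 + 2 = i + 1 := by decide +revert
    have bracket_mem := hJ (X (i + 2))
    rw [jacBracket_X, add_two_add_one, add_two_add_two, ← neg_mem_iff] at bracket_mem
    convert bracket_mem using 1
    ring
  obtain rfl | rfl | rfl : j = i ∨ j = i + 1 ∨ i = j + 1 := by decide +revert
  · simp
  · exact mem_succ i
  · rw [← neg_mem_iff, neg_sub]
    exact mem_succ j

variable {𝕜 : Type*} [Field 𝕜]

lemma pderiv_mem_of_isHomogeneous [CharZero 𝕜] {Ω g : MvPolynomial (Fin 3) 𝕜} {n k : ℕ} {ξ : 𝕜}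
    (hΩ : Ω.IsHomogeneous n) (hn : n ≠ 0) (hξ : ξ ≠ 0) (hg : g.IsHomogeneous k)
    {J : Ideal (MvPolynomial (Fin 3) 𝕜)} (hF : Ω - C ξ ∈ J) (hgJ : g ∈ J)
    (hJ : ∀ f, jacBracket Ω f g ∈ J) (j : Fin 3) : pderiv j g ∈ J := by
  have euler : (n : MvPolynomial (Fin 3) 𝕜) * Ω * pderiv j g =
      (∑ i, X i * (pderiv i Ω * pderiv j g - pderiv j Ω * pderiv i g))
        + pderiv j Ω * (k * g) := by
    rw [← nsmul_eq_mul, ← nsmul_eq_mul, ← hΩ.sum_X_mul_pderiv, ← hg.sum_X_mul_pderiv,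
      Finset.sum_mul, Finset.mul_sum, ← Finset.sum_add_distrib]
    exact Finset.sum_congr rfl fun i _ => by ring
  have mul_mem : (n : MvPolynomial (Fin 3) 𝕜) * Ω * pderiv j g ∈ J := by
    rw [euler]
    exact add_mem (sum_mem fun i _ => J.mul_mem_left _ (pderiv_mul_pderiv_sub_mem hJ i j))
      (J.mul_mem_left _ (J.mul_mem_left _ hgJ))
  have scalar_mul_mem : C (n * ξ) * pderiv j g ∈ J := by
    have : C (n * ξ) * pderiv j g = (n : MvPolynomial (Fin 3) 𝕜) * Ω * pderiv j g -
        (n : MvPolynomial (Fin 3) 𝕜) * pderiv j g * (Ω - C ξ) := by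
      rw [map_mul, map_natCast]
      ring
    rw [this]
    exact sub_mem mul_mem (J.mul_mem_left _ hF)
  have hunit : IsUnit (C (n * ξ) : MvPolynomial (Fin 3) 𝕜) :=
    (IsUnit.mk0 _ (mul_ne_zero (Nat.cast_ne_zero.mpr hn) hξ)).map C
  exact (Ideal.unit_mul_mem_iff_mem J hunit).mp scalar_mul_mem

lemma exists_pderiv_ne_zero {σ R : Type*} [Finite σ] [CommRing R] [IsDomain R] [CharZero R]
    {g : MvPolynomial σ R} {k : ℕ} (hg : g.IsHomogeneous k) (hk : k ≠ 0) (hne : g ≠ 0) :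
    ∃ j, pderiv j g ≠ 0 := by
  have := Fintype.ofFinite σ
  by_contra! hzero
  have euler := hg.sum_X_mul_pderiv
  simp only [hzero, mul_zero, Finset.sum_const_zero, nsmul_eq_mul] at euler
  exact mul_ne_zero (Nat.cast_ne_zero.mpr hk) hne euler.symm

/-- Euler's identity makes such an ideal stable under the partial derivatives of its homogeneous
elements, so it contains a nonzero constant. -/
lemma eq_top_of_isHomogeneous_mem [CharZero 𝕜] {Ω : MvPolynomial (Fin 3) 𝕜} {n : ℕ} {ξ : 𝕜}
    (hΩ : Ω.IsHomogeneous n) (hn : n ≠ 0) (hξ : ξ ≠ 0)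
    {J : Ideal (MvPolynomial (Fin 3) 𝕜)} (hF : Ω - C ξ ∈ J)
    (hJ : ∀ f, ∀ g ∈ J, jacBracket Ω f g ∈ J) {k : ℕ} {g : MvPolynomial (Fin 3) 𝕜}
    (hg : g.IsHomogeneous k) (hne : g ≠ 0) (hgJ : g ∈ J) : J = ⊤ := by
  induction k generalizing g with
  | zero =>
    exact J.eq_top_of_isUnit_mem hgJ (isUnit_of_totalDegree_eq_zero hne (hg.totalDegree hne))
  | succ k ih =>
    obtain ⟨j, hj⟩ := exists_pderiv_ne_zero hg k.succ_ne_zero hne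
    exact ih hg.pderiv hj (pderiv_mem_of_isHomogeneous hΩ hn hξ hg hF hgJ (hJ · g hgJ) j)

lemma isIntegral_adjoin_isHomogeneous {σ R : Type*} [CommRing R] {n : ℕ} (hn : n ≠ 0)
    (f : MvPolynomial σ R) :
    IsIntegral (Algebra.adjoin R {g : MvPolynomial σ R | g.IsHomogeneous n}) f := by
  induction f using MvPolynomial.induction_on with
  | C a => exact isIntegral_algebraMap (x := algebraMap R _ a)
  | add p q hp hq => exact hp.add hq
  | mul_X p i hp =>
    let X_pow : Algebra.adjoin R {g : MvPolynomial σ R | g.IsHomogeneous n} :=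
      ⟨X i ^ n, Algebra.subset_adjoin (isHomogeneous_X_pow i n)⟩
    exact hp.mul (.of_pow (Nat.pos_of_ne_zero hn) (isIntegral_algebraMap (x := X_pow)))

/-- Modulo `Ω - ξ` the form `ξ⁻¹ * Ω` is `1`, and multiplying by its powers equalises degrees. -/
lemma exists_isHomogeneous_dvd_sub_of_mem_adjoin {σ : Type*} {Ω v : MvPolynomial σ 𝕜} {n : ℕ}
    {ξ : 𝕜} (hΩ : Ω.IsHomogeneous n) (hξ : ξ ≠ 0)
    (hv : v ∈ Algebra.adjoin 𝕜 {g : MvPolynomial σ 𝕜 | g.IsHomogeneous n}) :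
    ∃ q g, g.IsHomogeneous (n * q) ∧ Ω - C ξ ∣ v - g := by
  let e := C ξ⁻¹ * Ω
  have C_inv_mul_C : C ξ⁻¹ * C ξ = (1 : MvPolynomial σ 𝕜) := by
    rw [← C_mul, inv_mul_cancel₀ hξ, C_1]
  have e_pow_isHomogeneous (q : ℕ) : (e ^ q).IsHomogeneous (n * q) := by
    simpa using ((isHomogeneous_C σ ξ⁻¹).mul hΩ).pow q
  have dvd_one_sub_e_pow (q : ℕ) : Ω - C ξ ∣ 1 - e ^ q := by
    have dvd_e_sub_one : Ω - C ξ ∣ 1 - e :=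
      ⟨-C ξ⁻¹, by linear_combination -C_inv_mul_C⟩
    exact dvd_e_sub_one.trans (by simpa using sub_dvd_pow_sub_pow 1 e q)
  induction hv using Algebra.adjoin_induction with
  | mem g hg => exact ⟨1, g, by simpa using hg, by simp⟩
  | algebraMap c => exact ⟨0, C c, isHomogeneous_C σ c, by simp [algebraMap_eq]⟩
  | add v w _ _ hv hw =>
    obtain ⟨q, g, hg, hvg⟩ := hv
    obtain ⟨r, h, hh, hwh⟩ := hw
    refine ⟨q + r, g * e ^ r + h * e ^ q, ?_, ?_⟩
    · rw [mul_add]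
      refine (hg.mul (e_pow_isHomogeneous r)).add ?_
      rw [add_comm]
      exact hh.mul (e_pow_isHomogeneous q)
    · rw [show v + w - (g * e ^ r + h * e ^ q) =
        v - g + (w - h) + (g * (1 - e ^ r) + h * (1 - e ^ q)) by ring]
      exact (hvg.add hwh).add
        (((dvd_one_sub_e_pow r).mul_left g).add ((dvd_one_sub_e_pow q).mul_left h))
  | mul v w _ _ hv hw =>
    obtain ⟨q, g, hg, hvg⟩ := hv
    obtain ⟨r, h, hh, hwh⟩ := hw
    refine ⟨q + r, g * h, by simpa only [mul_add] using hg.mul hh, ?_⟩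
    rw [show v * w - g * h = (v - g) * w + g * (w - h) by ring]
    exact (hvg.mul_right w).add (hwh.mul_left g)

/-- As `𝕜[σ]` is integral over its subalgebra generated by the forms of degree `n`, an ideal that is
strictly larger than the prime `(Ω - ξ)` remains so on that subalgebra. -/
lemma exists_isHomogeneous_mem_of_prime_sub_C {σ : Type*} {Ω : MvPolynomial σ 𝕜} {n : ℕ}
    {ξ : 𝕜} (hΩ : Ω.IsHomogeneous n) (hn : n ≠ 0) (hξ : ξ ≠ 0) (hprime : Prime (Ω - C ξ))
    {J : Ideal (MvPolynomial σ 𝕜)} (hJ : Ideal.span {Ω - C ξ} < J) :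
    ∃ k g, g.IsHomogeneous k ∧ g ≠ 0 ∧ g ∈ J := by
  have span_isPrime : (Ideal.span {Ω - C ξ}).IsPrime :=
    (Ideal.span_singleton_prime hprime.ne_zero).mpr hprime
  obtain ⟨f, hfJ, hf⟩ := SetLike.exists_of_lt hJ
  obtain ⟨v, hvJ, hv⟩ := SetLike.exists_of_lt <|
    Ideal.comap_lt_comap_of_integral_mem_sdiff hJ.le ⟨hfJ, hf⟩
      (isIntegral_adjoin_isHomogeneous hn f)
  rw [Ideal.mem_comap] at hvJ hv
  rw [Ideal.mem_span_singleton] at hv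
  obtain ⟨q, g, hg, hvg⟩ := exists_isHomogeneous_dvd_sub_of_mem_adjoin hΩ hξ v.2
  refine ⟨n * q, g, hg, ?_, ?_⟩
  · rintro rfl
    exact hv (by simpa using hvg)
  · have sub_mem : (v : MvPolynomial σ 𝕜) - g ∈ J := hJ.le (Ideal.mem_span_singleton.mpr hvg)
    exact (J.sub_mem_iff_right hvJ).mp sub_mem

end JacobianStableIdeals

/-- A Poisson ideal of a Poisson algebra: an ideal `I` with `{A, I} ⊆ I`. -/
def IsPoissonIdeal {𝕜 A : Type*} [CommRing 𝕜] [CommRing A] [Algebra 𝕜 A]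
    (P : PoissonStructure 𝕜 A) (I : Ideal A) : Prop :=
  ∀ x : A, ∀ y ∈ I, P.bracket x y ∈ I

section PoissonStructure

variable {𝕜 A : Type*} [CommRing 𝕜] [CommRing A] [Algebra 𝕜 A]

namespace PoissonStructure

variable (P : PoissonStructure 𝕜 A)

lemma add_right (a b c : A) : P.bracket a (b + c) = P.bracket a b + P.bracket a c := by
  rw [P.antisymm, P.add_left, P.antisymm b a, P.antisymm c a, neg_add, neg_neg, neg_neg]

lemma smul_right (r : 𝕜) (a b : A) : P.bracket a (r • b) = r • P.bracket a b := by
  rw [P.antisymm, P.smul_left, P.antisymm b a, smul_neg, neg_neg]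

/-- The Hamiltonian derivation `{a, -}` of an element `a`. -/
def hamiltonian (a : A) : Derivation 𝕜 A A :=
  Derivation.mk'
    { toFun := P.bracket a
      map_add' := P.add_right a
      map_smul' := (P.smul_right · a) }
    fun b c => by
      simp only [LinearMap.coe_mk, AddHom.coe_mk, P.leibniz, smul_eq_mul]
      ring

@[simp] lemma hamiltonian_apply (a b : A) : P.hamiltonian a b = P.bracket a b := rfl

lemma bracket_one (a : A) : P.bracket a 1 = 0 := (P.hamiltonian a).map_one_eq_zero

lemma one_bracket (a : A) : P.bracket 1 a = 0 := by rw [P.antisymm, P.bracket_one, neg_zero]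

lemma bracket_zero (a : A) : P.bracket a 0 = 0 := map_zero (P.hamiltonian a)

/-- The Poisson centre: the elements whose bracket with everything vanishes. -/
def center : Subalgebra 𝕜 A where
  carrier := {z | ∀ a, P.bracket a z = 0}
  add_mem' hz hw a := by rw [P.add_right, hz, hw, add_zero]
  mul_mem' hz hw a := by rw [P.leibniz, hz, hw, zero_mul, mul_zero, add_zero]
  algebraMap_mem' r a := (P.hamiltonian a).map_algebraMap r

/-- The algebra of operators on `A` generated by multiplications and Hamiltonian derivations; its
submodules are the Poisson ideals. -/
def opAlg : Subalgebra 𝕜 (Module.End 𝕜 A) :=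
  Algebra.adjoin 𝕜
    (Set.range (LinearMap.mulLeft 𝕜) ∪ Set.range fun a => (P.hamiltonian a : Module.End 𝕜 A))

lemma mulLeft_mem_opAlg (a : A) : LinearMap.mulLeft 𝕜 a ∈ P.opAlg :=
  Algebra.subset_adjoin (Or.inl ⟨a, rfl⟩)

lemma hamiltonian_mem_opAlg (a : A) : (P.hamiltonian a : Module.End 𝕜 A) ∈ P.opAlg :=
  Algebra.subset_adjoin (Or.inr ⟨a, rfl⟩)

variable {P}

lemma exists_forall_eq_smul_of_center_eq_bot (hP : P.center = ⊥) (φ : Module.End P.opAlg A) :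
    ∃ c : 𝕜, ∀ v, φ v = c • v := by
  have map_bracket (a v : A) : φ (P.bracket a v) = P.bracket a (φ v) :=
    φ.map_smul (⟨P.hamiltonian a, P.hamiltonian_mem_opAlg a⟩ : P.opAlg) v
  have map_mul (a v : A) : φ (a * v) = a * φ v :=
    φ.map_smul (⟨LinearMap.mulLeft 𝕜 a, P.mulLeft_mem_opAlg a⟩ : P.opAlg) v
  have mem_center : φ 1 ∈ P.center := fun a => by
    rw [← map_bracket, bracket_one, map_zero]
  rw [hP, Algebra.mem_bot] at mem_center
  obtain ⟨c, hc⟩ := mem_center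
  exact ⟨c, fun v => by rw [← mul_one v, map_mul, ← hc, mul_one, Algebra.smul_def, mul_comm]⟩

end PoissonStructure

variable {P : PoissonStructure 𝕜 A}

lemma IsPoissonIdeal.apply_mem {I : Ideal A} (hI : IsPoissonIdeal P I) {m : Module.End 𝕜 A}
    (hm : m ∈ P.opAlg) {t : A} (ht : t ∈ I) : m t ∈ I := by
  induction hm using Algebra.adjoin_induction generalizing t with
  | mem _ hm =>
    obtain ⟨a, rfl⟩ | ⟨a, rfl⟩ := hm
    · exact I.mul_mem_left a ht
    · exact hI a t ht
  | algebraMap r => exact Submodule.smul_of_tower_mem I r ht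
  | add m l _ _ hm hl => exact add_mem (hm ht) (hl ht)
  | mul _ _ _ _ hm hl => exact hm (hl ht)

lemma isPoissonIdeal_span {s : Set A} (hs : ∀ x, ∀ y ∈ s, P.bracket x y ∈ Ideal.span s) :
    IsPoissonIdeal P (Ideal.span s) := by
  intro x y hy
  induction hy using Submodule.span_induction with
  | mem y hy => exact hs x y hy
  | zero => rw [P.bracket_zero]; exact zero_mem _
  | add y z _ _ hy hz => exact P.add_right x y z ▸ add_mem hy hz
  | smul a y hmem hy =>
    rw [smul_eq_mul, P.leibniz]
    exact add_mem (Ideal.mul_mem_left _ _ hmem) (Ideal.mul_mem_left _ _ hy)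

namespace IsPoissonSimple

lemma isUnit_of_mem_center (hP : IsPoissonSimple P) {z : A} (hz : z ∈ P.center) (hne : z ≠ 0) :
    IsUnit z := by
  have : IsPoissonIdeal P (Ideal.span {z}) := isPoissonIdeal_span <| by
    rintro x _ rfl
    exact hz x ▸ zero_mem _
  rw [← Ideal.span_singleton_eq_top]
  exact (hP _ this).resolve_left (by rwa [Ideal.span_singleton_eq_bot])

lemma isSimpleModule_opAlg [Nontrivial A] (hP : IsPoissonSimple P) : IsSimpleModule P.opAlg A := by
  refine (isSimpleModule_iff _ _).mpr ⟨fun N => ?_⟩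
  let I : Ideal A :=
    { N.toAddSubmonoid with
      smul_mem' := fun a _ h => N.smul_mem ⟨LinearMap.mulLeft 𝕜 a, P.mulLeft_mem_opAlg a⟩ h }
  have : IsPoissonIdeal P I := fun a _ h =>
    N.smul_mem ⟨P.hamiltonian a, P.hamiltonian_mem_opAlg a⟩ h
  have mem_iff (v : A) : v ∈ N ↔ v ∈ I := Iff.rfl
  refine (hP I this).imp (fun h => ?_) (fun h => ?_) <;>
    · ext v
      rw [mem_iff, h]
      rfl

lemma exists_mem_opAlg_eqOn [Nontrivial A] (hP : IsPoissonSimple P) (hcenter : P.center = ⊥)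
    (f : Module.End 𝕜 A) (s : Finset A) : ∃ m ∈ P.opAlg, ∀ v ∈ s, m v = f v := by
  have := hP.isSimpleModule_opAlg
  let f' : Module.End (Module.End P.opAlg A) A :=
    { f with
      map_smul' := fun φ v => by
        obtain ⟨c, hc⟩ := PoissonStructure.exists_forall_eq_smul_of_center_eq_bot hcenter φ
        simp [hc] }
  obtain ⟨m, hm⟩ := jacobson_density (R := P.opAlg) (M := A) f' s
  exact ⟨m, m.2, fun v hv => (hm v hv).symm⟩

end IsPoissonSimple

end PoissonStructure

section TensorProduct

open PiTensorProduct

variable {𝕜 ι : Type*} {A : ι → Type*}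

section CommRing

variable [CommRing 𝕜]

section Modules

variable [∀ i, AddCommGroup (A i)] [∀ i, Module 𝕜 (A i)]

lemma exists_finset_map_eq_of_eqOn (t : ⨂[𝕜] i, A i) : ∃ s : ∀ i, Finset (A i),
    ∀ m f : ∀ i, Module.End 𝕜 (A i), (∀ i, ∀ v ∈ s i, m i v = f i v) →
      PiTensorProduct.map m t = PiTensorProduct.map f t := by
  classical
  induction t using PiTensorProduct.induction_on with
  | smul_tprod c x =>
    refine ⟨fun i => {x i}, fun m f hmf => ?_⟩
    simp only [Finset.mem_singleton, forall_eq] at hmf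
    simp only [map_smul, map_tprod, hmf]
  | add t u ht hu =>
    obtain ⟨s, hs⟩ := ht
    obtain ⟨s', hs'⟩ := hu
    refine ⟨fun i => s i ∪ s' i, fun m f hmf => ?_⟩
    rw [map_add, map_add, hs m f fun i v hv => hmf i v (Finset.mem_union_left _ hv),
      hs' m f fun i v hv => hmf i v (Finset.mem_union_right _ hv)]

end Modules

variable [DecidableEq ι]

section Ring

variable [∀ i, Ring (A i)] [∀ i, Algebra 𝕜 (A i)]

/-- The operator on `⨂[𝕜] i, A i` that acts on the `i`-th factor alone, as an algebra
homomorphism in that action. -/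
noncomputable def singleEnd (i : ι) : Module.End 𝕜 (A i) →ₐ[𝕜] Module.End 𝕜 (⨂[𝕜] i, A i) :=
  (liftAlgHom (mapMultilinear 𝕜 A A) PiTensorProduct.map_one PiTensorProduct.map_mul).comp
    (singleAlgHom (A := fun i => Module.End 𝕜 (A i)) i)

lemma singleEnd_apply (i : ι) (m : Module.End 𝕜 (A i)) :
    singleEnd i m = PiTensorProduct.map (Pi.mulSingle i m) :=
  lift.tprod (φ := mapMultilinear 𝕜 A A) (Pi.mulSingle i m)

lemma singleEnd_tprod (i : ι) (m : Module.End 𝕜 (A i)) (x : ∀ j, A j) :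
    singleEnd i m (tprod 𝕜 x) = tprod 𝕜 (Function.update x i (m (x i))) := by
  rw [singleEnd_apply, map_tprod]
  congr 1
  ext j
  obtain rfl | h := eq_or_ne j i
  · simp
  · simp [h]

lemma singleEnd_mulLeft (i : ι) (a : A i) :
    singleEnd i (LinearMap.mulLeft 𝕜 a) = LinearMap.mulLeft 𝕜 (singleAlgHom (R := 𝕜) i a) := by
  refine PiTensorProduct.ext (MultilinearMap.ext fun x => ?_)
  simp only [LinearMap.compMultilinearMap_apply, singleEnd_tprod, LinearMap.mulLeft_apply,
    singleAlgHom_apply, tprod_mul_tprod]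
  congr 1
  ext j
  obtain rfl | h := eq_or_ne j i
  · simp
  · simp [h]

lemma tprod_update (i : ι) (a : A i) (x : ∀ j, A j) :
    tprod 𝕜 (Function.update x i a) =
      singleAlgHom (R := 𝕜) i a * tprod 𝕜 (Function.update x i 1) := by
  rw [← LinearMap.mulLeft_apply (R := 𝕜), ← singleEnd_mulLeft, singleEnd_tprod]
  simp

lemma map_mem_of_forall_singleEnd_mem [Finite ι]
    {S : Subalgebra 𝕜 (Module.End 𝕜 (⨂[𝕜] i, A i))} {m : ∀ i, Module.End 𝕜 (A i)}
    (hm : ∀ i, singleEnd i (m i) ∈ S) : PiTensorProduct.map m ∈ S := by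
  have := Fintype.ofFinite ι
  change m ∈ S.toSubmonoid.comap mapMonoidHom
  rw [← Finset.noncommProd_mulSingle m]
  refine Submonoid.noncommProd_mem _ _ _ _ fun i _ => ?_
  change PiTensorProduct.map (Pi.mulSingle i (m i)) ∈ S
  exact singleEnd_apply i (m i) ▸ hm i

end Ring

section Retraction

variable [Finite ι] [∀ i, CommRing (A i)] [∀ i, Algebra 𝕜 (A i)]

lemma exists_singleAlgHom_retraction (h : ∀ j, ∃ φ : A j →ₗ[𝕜] 𝕜, φ 1 = 1) (i : ι) :
    ∃ r : (⨂[𝕜] i, A i) →ₗ[𝕜] A i,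
      r 1 = 1 ∧ ∀ a t, r (singleAlgHom (R := 𝕜) i a * t) = a * r t := by
  have := Fintype.ofFinite ι
  choose φ hφ using h
  let ψ : ∀ j, A j →ₗ[𝕜] A i :=
    Function.update (fun j => (φ j).smulRight 1) i LinearMap.id
  have ψ_self : ψ i = LinearMap.id := Function.update_self _ _ _
  have ψ_one (j : ι) : ψ j 1 = 1 := by
    obtain rfl | h := eq_or_ne j i
    · simp [ψ]
    · simp [ψ, h, hφ]
  let r := lift ((MultilinearMap.mkPiAlgebra 𝕜 ι (A i)).compLinearMap ψ)
  have r_tprod (x : ∀ j, A j) : r (tprod 𝕜 x) = ∏ j, ψ j (x j) := by simp [r]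
  have r_single_mul (a : A i) : r ∘ₗ LinearMap.mulLeft 𝕜 (singleAlgHom (R := 𝕜) i a) =
      LinearMap.mulLeft 𝕜 a ∘ₗ r := by
    refine PiTensorProduct.ext (MultilinearMap.ext fun x => ?_)
    simp only [LinearMap.compMultilinearMap_apply, LinearMap.comp_apply, LinearMap.mulLeft_apply,
      singleAlgHom_apply, tprod_mul_tprod, r_tprod]
    rw [← Finset.mul_prod_erase _ _ (Finset.mem_univ i),
      ← Finset.mul_prod_erase _ _ (Finset.mem_univ i), ψ_self, LinearMap.id_apply,
      LinearMap.id_apply, ← mul_assoc]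
    congr 1
    · simp
    · refine Finset.prod_congr rfl fun j hj => ?_
      simp [Finset.ne_of_mem_erase hj]
  refine ⟨r, ?_, fun a => LinearMap.congr_fun (r_single_mul a)⟩
  change r (tprod 𝕜 1) = 1
  rw [r_tprod]
  exact Finset.prod_eq_one fun j _ => ψ_one j

lemma comap_map_singleAlgHom (h : ∀ j, ∃ φ : A j →ₗ[𝕜] 𝕜, φ 1 = 1) (i : ι) (I : Ideal (A i)) :
    (I.map (singleAlgHom (R := 𝕜) i)).comap (singleAlgHom (R := 𝕜) i) = I := by
  refine le_antisymm (fun a ha => ?_) Ideal.le_comap_map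
  obtain ⟨r, r_one, r_mul⟩ := exists_singleAlgHom_retraction h i
  have r_mul_mem {y : ⨂[𝕜] i, A i} (hy : y ∈ I.map (singleAlgHom (R := 𝕜) i)) :
      ∀ t, r (y * t) ∈ I := by
    induction hy using Submodule.span_induction with
    | mem y hy =>
      obtain ⟨c, hc, rfl⟩ := hy
      exact fun t => r_mul c t ▸ I.mul_mem_right _ hc
    | zero => simp
    | add y z _ _ hy hz => exact fun t => by rw [add_mul, map_add]; exact add_mem (hy t) (hz t)
    | smul s y _ hy => exact fun t => by rw [smul_eq_mul, mul_comm s, mul_assoc]; exact hy _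
  have := r_mul_mem (Ideal.mem_comap.mp ha) 1
  rwa [r_mul, r_one, mul_one] at this

end Retraction

end CommRing

section Field

variable [Field 𝕜] [Finite ι]

lemma exists_map_smulRight_eq_smul_one [∀ i, Ring (A i)] [∀ i, Algebra 𝕜 (A i)]
    {t : ⨂[𝕜] i, A i} (ht : t ≠ 0) : ∃ φ : ∀ i, A i →ₗ[𝕜] 𝕜, ∃ c : 𝕜, c ≠ 0 ∧
      PiTensorProduct.map (fun i => (φ i).smulRight (1 : A i)) t = c • 1 := by
  have := Fintype.ofFinite ι
  let b := fun i => Module.Basis.ofVectorSpace 𝕜 (A i)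
  let B := Basis.piTensorProduct b
  obtain ⟨p, hp⟩ := Finsupp.ne_iff.mp (B.repr.map_ne_zero_iff.mpr ht)
  refine ⟨fun i => (b i).coord (p i), B.repr t p, hp, ?_⟩
  have map_eq : PiTensorProduct.map (fun i => ((b i).coord (p i)).smulRight (1 : A i)) =
      (B.coord p).smulRight 1 := by
    refine PiTensorProduct.ext (MultilinearMap.ext fun x => ?_)
    simp only [LinearMap.compMultilinearMap_apply, map_tprod, LinearMap.smulRight_apply,
      MultilinearMap.map_smul_univ, Module.Basis.coord_apply, B,
      Basis.piTensorProduct_repr_tprod_apply]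
    rfl
  exact LinearMap.congr_fun map_eq t

end Field

end TensorProduct

section PoissonTensorProduct

open PiTensorProduct

variable {d : ℕ} {A : Fin d → Type*}

namespace IsPiTensorBracket

variable {𝕜 : Type*} [CommRing 𝕜] [∀ i, CommRing (A i)] [∀ i, Algebra 𝕜 (A i)]
  {P : ∀ i, PoissonStructure 𝕜 (A i)} {PT : PoissonStructure 𝕜 (⨂[𝕜] i, A i)}

lemma hamiltonian_singleAlgHom (hPT : IsPiTensorBracket P PT) (i : Fin d) (a : A i) :
    (PT.hamiltonian (singleAlgHom (R := 𝕜) i a) : Module.End 𝕜 (⨂[𝕜] i, A i)) =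
      singleEnd i ((P i).hamiltonian a : Module.End 𝕜 (A i)) := by
  refine PiTensorProduct.ext (MultilinearMap.ext fun x => ?_)
  simp only [LinearMap.compMultilinearMap_apply, singleEnd_tprod, Derivation.coeFn_coe,
    PoissonStructure.hamiltonian_apply, singleAlgHom_apply]
  rw [hPT, Finset.sum_eq_single i]
  · congr 1
    ext j
    obtain rfl | h := eq_or_ne j i
    · simp
    · simp [h]
  · intro j _ hj
    refine MultilinearMap.map_coord_zero _ j ?_
    simp [hj, PoissonStructure.one_bracket]
  · simp

lemma bracket_singleAlgHom_tprod (hPT : IsPiTensorBracket P PT) (i : Fin d) (a : A i)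
    (x : ∀ j, A j) :
    PT.bracket (singleAlgHom (R := 𝕜) i a) (tprod 𝕜 x) =
      singleAlgHom (R := 𝕜) i ((P i).bracket a (x i)) * tprod 𝕜 (Function.update x i 1) := by
  rw [← tprod_update]
  exact (LinearMap.congr_fun (hPT.hamiltonian_singleAlgHom i a) _).trans (singleEnd_tprod ..)

lemma singleEnd_mem_opAlg (hPT : IsPiTensorBracket P PT) (i : Fin d) {m : Module.End 𝕜 (A i)}
    (hm : m ∈ (P i).opAlg) : singleEnd i m ∈ PT.opAlg := by
  suffices (P i).opAlg ≤ PT.opAlg.comap (singleEnd i) from this hm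
  refine Algebra.adjoin_le ?_
  rintro _ (⟨a, rfl⟩ | ⟨a, rfl⟩) <;> rw [SetLike.mem_coe, Subalgebra.mem_comap]
  · exact singleEnd_mulLeft (𝕜 := 𝕜) i a ▸ PT.mulLeft_mem_opAlg _
  · exact hPT.hamiltonian_singleAlgHom i a ▸ PT.hamiltonian_mem_opAlg _

lemma isPoissonIdeal_map_singleAlgHom (hPT : IsPiTensorBracket P PT) {i : Fin d}
    {I : Ideal (A i)} (hI : IsPoissonIdeal (P i) I) :
    IsPoissonIdeal PT (I.map (singleAlgHom (R := 𝕜) i)) := by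
  have bracket_mem {c : A i} (hc : c ∈ I) (x : ⨂[𝕜] i, A i) :
      PT.bracket (singleAlgHom (R := 𝕜) i c) x ∈ I.map (singleAlgHom (R := 𝕜) i) := by
    induction x using PiTensorProduct.induction_on with
    | smul_tprod r x =>
      rw [PT.smul_right, hPT.bracket_singleAlgHom_tprod, (P i).antisymm, map_neg]
      refine Submodule.smul_of_tower_mem _ r (Ideal.mul_mem_right _ _ (neg_mem ?_))
      exact Ideal.mem_map_of_mem _ (hI _ c hc)
    | add x y hx hy =>
      rw [PT.add_right]
      exact add_mem hx hy
  refine isPoissonIdeal_span ?_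
  rintro x _ ⟨c, hc, rfl⟩
  exact PT.antisymm x _ ▸ neg_mem (bracket_mem hc x)

end IsPiTensorBracket

variable {𝕜 : Type*} [Field 𝕜] [∀ i, CommRing (A i)] [∀ i, Algebra 𝕜 (A i)]
  {P : ∀ i, PoissonStructure 𝕜 (A i)} {PT : PoissonStructure 𝕜 (⨂[𝕜] i, A i)}

lemma IsPoissonSimple.piTensorProduct [∀ i, Nontrivial (A i)] (hP : ∀ i, IsPoissonSimple (P i))
    (hcenter : ∀ i, (P i).center = ⊥) (hPT : IsPiTensorBracket P PT) : IsPoissonSimple PT := by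
  refine fun I hI => or_iff_not_imp_left.mpr fun I_ne_bot => ?_
  obtain ⟨t, htI, ht⟩ := Submodule.exists_mem_ne_zero_of_ne_bot I_ne_bot
  obtain ⟨φ, c, hc, map_φ⟩ := exists_map_smulRight_eq_smul_one ht
  obtain ⟨s, hs⟩ := exists_finset_map_eq_of_eqOn t
  choose m m_mem hm using fun i =>
    (hP i).exists_mem_opAlg_eqOn (hcenter i) ((φ i).smulRight 1) (s i)
  have c_mem : c • (1 : ⨂[𝕜] i, A i) ∈ I := by
    rw [← map_φ, ← hs m _ hm]
    exact IsPoissonIdeal.apply_mem hI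
      (map_mem_of_forall_singleEnd_mem fun i => hPT.singleEnd_mem_opAlg i (m_mem i)) htI
  rw [← Algebra.algebraMap_eq_smul_one] at c_mem
  exact I.eq_top_of_isUnit_mem c_mem ((IsUnit.mk0 c hc).map _)

lemma IsPiTensorBracket.isPoissonSimple_factor [∀ i, Nontrivial (A i)]
    (hPT : IsPiTensorBracket P PT) (hs : IsPoissonSimple PT) (i : Fin d) :
    IsPoissonSimple (P i) := by
  intro I hI
  have exists_functional (j : Fin d) : ∃ φ : A j →ₗ[𝕜] 𝕜, φ 1 = 1 := by
    have ker_eq_bot : LinearMap.ker (Algebra.linearMap 𝕜 (A j)) = ⊥ :=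
      LinearMap.ker_eq_bot.mpr (algebraMap 𝕜 (A j)).injective
    obtain ⟨φ, hφ⟩ := (Algebra.linearMap 𝕜 (A j)).exists_leftInverse_of_injective ker_eq_bot
    exact ⟨φ, by simpa using LinearMap.congr_fun hφ 1⟩
  have comap_map := comap_map_singleAlgHom exists_functional i
  refine (hs _ (hPT.isPoissonIdeal_map_singleAlgHom hI)).imp (fun h => ?_) (fun h => ?_)
  · rw [← comap_map I, h, ← Ideal.map_bot (f := singleAlgHom (R := 𝕜) i), comap_map]
  · rw [← comap_map I, h, Ideal.comap_top]

end PoissonTensorProduct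

section PotentialQuotient

open MvPolynomial

section CommRing

variable {R : Type*} [CommRing R] {Ω : MvPolynomial (Fin 3) R} {ξ : R}

/-- The projection `PQuot.mk` as an algebra homomorphism. -/
noncomputable def PQuot.mkₐ (Ω : MvPolynomial (Fin 3) R) (ξ : R) :
    MvPolynomial (Fin 3) R →ₐ[R] PQuot R Ω ξ :=
  Ideal.Quotient.mkₐ R (Ideal.span {Ω - C ξ})

lemma PQuot.mkₐ_surjective (Ω : MvPolynomial (Fin 3) R) (ξ : R) :
    Function.Surjective (PQuot.mkₐ Ω ξ) :=
  Ideal.Quotient.mk_surjective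

lemma PQuot.ker_mkₐ (Ω : MvPolynomial (Fin 3) R) (ξ : R) :
    RingHom.ker (PQuot.mkₐ Ω ξ) = Ideal.span {Ω - C ξ} :=
  Ideal.Quotient.mkₐ_ker R _

lemma PQuot.mkₐ_eq_zero_iff {f : MvPolynomial (Fin 3) R} :
    PQuot.mkₐ Ω ξ f = 0 ↔ Ω - C ξ ∣ f := by
  rw [← RingHom.mem_ker, PQuot.ker_mkₐ, Ideal.mem_span_singleton]

lemma IsInducedBracket.bracket_mkₐ {P : PoissonStructure R (PQuot R Ω ξ)}
    (hP : IsInducedBracket Ω ξ P) (f g : MvPolynomial (Fin 3) R) :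
    P.bracket (PQuot.mkₐ Ω ξ f) (PQuot.mkₐ Ω ξ g) = PQuot.mkₐ Ω ξ (jacBracket Ω f g) :=
  hP f g

lemma constantCoeff_jacBracket {n : ℕ} (hΩ : Ω.IsHomogeneous n) (hn : 2 ≤ n)
    (f g : MvPolynomial (Fin 3) R) : constantCoeff (jacBracket Ω f g) = 0 := by
  have constantCoeff_pderiv (i : Fin 3) : constantCoeff (pderiv i Ω) = 0 :=
    constantCoeff_of_isHomogeneous hΩ.pderiv (by lia)
  simp [jacBracket, Matrix.det_fin_three, constantCoeff_pderiv]

end CommRing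

variable {𝕜 : Type*} [Field 𝕜] {Ω : MvPolynomial (Fin 3) 𝕜} {n : ℕ} {ξ : 𝕜}

lemma HasIsolatedSingularity.nontrivial_pQuot (hiso : HasIsolatedSingularity Ω)
    (hΩ : Ω.IsHomogeneous n) (hn : n ≠ 0) (ξ : 𝕜) : Nontrivial (PQuot 𝕜 Ω ξ) := by
  refine ⟨⟨1, 0, fun h => ?_⟩⟩
  rw [← map_one (PQuot.mkₐ Ω ξ), PQuot.mkₐ_eq_zero_iff] at h
  exact (hiso.prime_sub_C hΩ hn ξ).not_isUnit (isUnit_of_dvd_one h)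

namespace IsInducedBracket

lemma isPoissonSimple [CharZero 𝕜] {P : PoissonStructure 𝕜 (PQuot 𝕜 Ω ξ)}
    (hP : IsInducedBracket Ω ξ P) (hiso : HasIsolatedSingularity Ω) (hΩ : Ω.IsHomogeneous n)
    (hn : n ≠ 0) (hξ : ξ ≠ 0) : IsPoissonSimple P := by
  intro I hI
  let J := I.comap (PQuot.mkₐ Ω ξ)
  have map_J : J.map (PQuot.mkₐ Ω ξ) = I :=
    Ideal.map_comap_of_surjective _ (PQuot.mkₐ_surjective Ω ξ) I
  have span_le_J : Ideal.span {Ω - C ξ} ≤ J :=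
    PQuot.ker_mkₐ Ω ξ ▸ Ideal.ker_le_comap _
  obtain span_eq_J | span_lt_J := span_le_J.eq_or_lt
  · left
    rw [← map_J, ← span_eq_J, ← PQuot.ker_mkₐ, Ideal.map_eq_bot_iff_le_ker]
  · right
    obtain ⟨k, g, hg, g_ne_zero, hgJ⟩ :=
      exists_isHomogeneous_mem_of_prime_sub_C hΩ hn hξ (hiso.prime_sub_C hΩ hn ξ) span_lt_J
    have J_stable (f) : ∀ g ∈ J, jacBracket Ω f g ∈ J := fun g hg => by
      rw [Ideal.mem_comap, ← hP.bracket_mkₐ]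
      exact hI _ _ hg
    have J_eq_top : J = ⊤ := eq_top_of_isHomogeneous_mem hΩ hn hξ
      (span_le_J (Ideal.mem_span_singleton_self _)) J_stable hg g_ne_zero hgJ
    rw [← map_J, J_eq_top, Ideal.map_top]

lemma center_eq_bot [CharZero 𝕜] {P : PoissonStructure 𝕜 (PQuot 𝕜 Ω ξ)}
    (hP : IsInducedBracket Ω ξ P) (hiso : HasIsolatedSingularity Ω) (hΩ : Ω.IsHomogeneous n)
    (hn : n ≠ 0) (hξ : ξ ≠ 0) : P.center = ⊥ := by
  rw [eq_bot_iff]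
  intro z hz
  obtain rfl | z_ne_zero := eq_or_ne z 0
  · exact zero_mem _
  obtain ⟨w, hw⟩ :=
    ((hP.isPoissonSimple hiso hΩ hn hξ).isUnit_of_mem_center hz z_ne_zero).exists_right_inv
  obtain ⟨a, rfl⟩ := PQuot.mkₐ_surjective Ω ξ z
  obtain ⟨b, rfl⟩ := PQuot.mkₐ_surjective Ω ξ w
  have dvd_mul_sub_one : Ω - C ξ ∣ a * b - 1 := by
    rw [← PQuot.mkₐ_eq_zero_iff, map_sub, map_mul, map_one, hw, sub_self]
  have prime_leadingForm : Prime (leadingForm (Ω - C ξ)) := by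
    rw [hiso.leadingForm_sub_C hΩ hn]
    exact (hiso.irreducible hΩ hn).prime
  obtain ⟨c, hc⟩ := exists_dvd_sub_C_of_dvd_mul_sub_one prime_leadingForm dvd_mul_sub_one
  rw [← PQuot.mkₐ_eq_zero_iff, map_sub, sub_eq_zero] at hc
  exact Algebra.mem_bot.mpr ⟨c, by rw [hc, ← algebraMap_eq, AlgHom.commutes]⟩

/-- The images of the polynomials vanishing at the origin, a singular point of `Ω = 0`, form a
proper nonzero Poisson ideal. -/
lemma not_isPoissonSimple {P : PoissonStructure 𝕜 (PQuot 𝕜 Ω 0)}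
    (hP : IsInducedBracket Ω 0 P) (hΩ : Ω.IsHomogeneous n) (hn : 2 ≤ n) :
    ¬ IsPoissonSimple P := by
  intro hs
  have K_poisson : IsPoissonIdeal P ((RingHom.ker constantCoeff).map (PQuot.mkₐ Ω 0)) := by
    intro x y hy
    obtain ⟨f, rfl⟩ := PQuot.mkₐ_surjective Ω 0 x
    obtain ⟨g, -, rfl⟩ := (Ideal.mem_map_iff_of_surjective _ (PQuot.mkₐ_surjective Ω 0)).mp hy
    rw [hP.bracket_mkₐ]
    exact Ideal.mem_map_of_mem _ (constantCoeff_jacBracket hΩ hn f g)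
  obtain h | h := hs _ K_poisson
  · have X_mem_ker : X 0 ∈ RingHom.ker (PQuot.mkₐ Ω 0) :=
      (Ideal.map_eq_bot_iff_le_ker _).mp h (constantCoeff_X _ 0)
    have Ω_dvd_X : Ω ∣ X 0 := by simpa [PQuot.mkₐ_eq_zero_iff] using X_mem_ker
    have Ω_ne_zero : Ω ≠ 0 := ne_zero_of_dvd_ne_zero (X_ne_zero 0) Ω_dvd_X
    have totalDegree_le := totalDegree_le_of_dvd_of_isDomain Ω_dvd_X (X_ne_zero 0)
    rw [hΩ.totalDegree Ω_ne_zero, totalDegree_X] at totalDegree_le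
    lia
  · obtain ⟨f, hf, mk_f⟩ := (Ideal.mem_map_iff_of_surjective _ (PQuot.mkₐ_surjective Ω 0)).mp
      (h ▸ Submodule.mem_top : (1 : PQuot 𝕜 Ω 0) ∈ _)
    have Ω_dvd : Ω ∣ f - 1 := by
      simpa [mk_f] using PQuot.mkₐ_eq_zero_iff (Ω := Ω) (ξ := 0) (f := f - 1)
    have := map_dvd constantCoeff Ω_dvd
    rw [RingHom.mem_ker] at hf
    simp [constantCoeff_of_isHomogeneous hΩ (by lia), hf] at this

lemma isPoissonSimple_iff [CharZero 𝕜] {P : PoissonStructure 𝕜 (PQuot 𝕜 Ω ξ)}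
    (hP : IsInducedBracket Ω ξ P) (hiso : HasIsolatedSingularity Ω) (hΩ : Ω.IsHomogeneous n)
    (hn : 2 ≤ n) : IsPoissonSimple P ↔ ξ ≠ 0 := by
  refine ⟨?_, hP.isPoissonSimple hiso hΩ (by lia)⟩
  rintro hs rfl
  exact hP.not_isPoissonSimple hΩ hn hs

end IsInducedBracket

end PotentialQuotient

theorem tensorProduct_of_potentials_poissonSimple_iff_general
    {𝕜 : Type*} [Field 𝕜] [CharZero 𝕜]
    (d : ℕ) (Ω : Fin d → MvPolynomial (Fin 3) 𝕜) (n : Fin d → ℕ)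
    (hhom : ∀ i, (Ω i).IsHomogeneous (n i))
    (hiso : ∀ i, HasIsolatedSingularity (Ω i))
    (hdeg : ∀ i, 2 ≤ n i)
    (ξ : Fin d → 𝕜)
    (P : ∀ i, PoissonStructure 𝕜 (PQuot 𝕜 (Ω i) (ξ i)))
    (hP : ∀ i, IsInducedBracket (Ω i) (ξ i) (P i))
    (PT : PoissonStructure 𝕜 (⨂[𝕜] i, PQuot 𝕜 (Ω i) (ξ i)))
    (hPT : IsPiTensorBracket P PT) :
    IsPoissonSimple PT ↔ ∀ i, ξ i ≠ 0 := by
  have n_ne_zero (i : Fin d) : n i ≠ 0 := Nat.ne_zero_of_lt (hdeg i)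
  have (i : Fin d) : Nontrivial (PQuot 𝕜 (Ω i) (ξ i)) :=
    (hiso i).nontrivial_pQuot (hhom i) (n_ne_zero i) (ξ i)
  have factor_simple_iff (i : Fin d) : IsPoissonSimple (P i) ↔ ξ i ≠ 0 :=
    (hP i).isPoissonSimple_iff (hiso i) (hhom i) (hdeg i)
  constructor
  · exact fun hs i => (factor_simple_iff i).mp (hPT.isPoissonSimple_factor hs i)
  · exact fun hξ => .piTensorProduct (fun i => (factor_simple_iff i).mpr (hξ i))
      (fun i => (hP i).center_eq_bot (hiso i) (hhom i) (n_ne_zero i) (hξ i)) hPT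

open PiTensorProduct in
/-- Theorem 0.2(3): `P_{Ω₁-ξ₁} ⊗ ⋯ ⊗ P_{Ω_d-ξ_d}` is Poisson simple iff all `ξ i ≠ 0`. -/
theorem tensorProduct_of_potentials_poissonSimple_iff
    {𝕜 : Type*} [Field 𝕜] [IsAlgClosed 𝕜] [CharZero 𝕜]
    (d : ℕ) (Ω : Fin d → MvPolynomial (Fin 3) 𝕜) (n : Fin d → ℕ)
    (hhom : ∀ i, (Ω i).IsHomogeneous (n i))
    (hiso : ∀ i, HasIsolatedSingularity (Ω i))
    (hdeg : ∀ i, 5 ≤ n i)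
    (hdist : Function.Injective n)
    (ξ : Fin d → 𝕜)
    (P : ∀ i, PoissonStructure 𝕜 (PQuot 𝕜 (Ω i) (ξ i)))
    (hP : ∀ i, IsInducedBracket (Ω i) (ξ i) (P i))
    (PT : PoissonStructure 𝕜 (⨂[𝕜] i, PQuot 𝕜 (Ω i) (ξ i)))
    (hPT : IsPiTensorBracket P PT) :
    IsPoissonSimple PT ↔ ∀ i, ξ i ≠ 0 :=
  tensorProduct_of_potentials_poissonSimple_iff_general d Ω n hhom hiso
    (fun i => le_trans (by norm_num) (hdeg i)) ξ P hP PT hPT
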